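/- Let S be a finite set of points in the plane in general position, and let a, b ∈ S with b ∈ C₁(a) and a→b a directed edge of Θ₆(S). If c ∈ S, c ≠ a, lies in the cone C(b,a) of b that contains a and satisfies ‖cb‖ < ‖ab‖, then c ∈ C₂(a) ∪ C₆(a). -/

import Mathlib

/-!
Let `f z` be the component of `z` along the direction `π / 6`, the bisector direction of `C₁`;
it is additive. Since `b ∈ C₁(a)`, the point `a` lies in `C₄(b)`, the reflection of `C₁` through
the apex, so `c ∈ C₄(b)` as well and hence `b ∈ C₁(c)`. Thus `‖ab‖ = f (b - a)` and
`‖cb‖ = f (b - c)`, and `‖cb‖ < ‖ab‖` says `f (c - a) > 0`: the direction of `c - a` is within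
`π / 2` of `π / 6`, so `c ∈ C₁(a) ∪ C₂(a) ∪ C₆(a)`. If `c` were in `C₁(a)`, then
`‖ac‖ = f (c - a) = f (b - a) - f (b - c) < f (b - a) = ‖ab‖`, because `f (b - c) > 0`,
contradicting that `a → b` is an edge of `Θ₆(S)`.
-/

open Real

noncomputable section

/-- Counterclockwise angle in `[0, 2π)` from the positive x-axis to the direction of `z`. -/
def argIn (z : ℂ) : ℝ := if 0 ≤ Complex.arg z then Complex.arg z else Complex.arg z + 2 * π

/-- The half-open cone `C_i(u)` with apex `u`: points `p ≠ u` whose direction from `u` has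
counterclockwise angle in `[(i-1)π/3, iπ/3)`. -/
def cone (i : ℕ) (u : ℂ) : Set ℂ :=
  {p | p ≠ u ∧ argIn (p - u) ∈ Set.Ico (((i : ℝ) - 1) * (π / 3)) ((i : ℝ) * (π / 3))}

/-- The index `i ∈ {1, …, 6}` of the cone of `u` containing `v`. -/
def coneIdx (u v : ℂ) : ℕ := (⌊argIn (v - u) / (π / 3)⌋).toNat + 1

/-- The angle of the bisector ray of the cone of `u` containing `v`. -/
def bisAngle (u v : ℂ) : ℝ := ((coneIdx u v : ℝ) - 1) * (π / 3) + π / 6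

/-- The projective distance from `u` to `v`: the Euclidean distance from `u` to the
orthogonal projection of `v` onto the bisector ray of the cone of `u` containing `v`. -/
def projDist (u v : ℂ) : ℝ :=
  ((v - u) * Complex.exp (-(Complex.I * (bisAngle u v : ℂ)))).re

/-- `S` is in general position: no two points of `S` lie on a common line parallel to one of
the six rays from the origin at angles `jπ/3`. -/
def GenPos (S : Finset ℂ) : Prop :=
  ∀ u ∈ S, ∀ v ∈ S, u ≠ v → ∀ j : ℕ, argIn (v - u) ≠ (j : ℝ) * (π / 3)

/-- `S` is in convex position: every point of `S` is an extreme point of the convex hull. -/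
def ConvexPos (S : Finset ℂ) : Prop :=
  ∀ p ∈ S, p ∈ Set.extremePoints ℝ (convexHull ℝ (S : Set ℂ))

/-- `u → v` is a directed edge of `Θ₆(S)`: `v` minimizes the projective distance from `u`
among the points of `S` in the cone of `u` containing `v`. -/
def ThetaEdge (S : Finset ℂ) (u v : ℂ) : Prop :=
  u ∈ S ∧ v ∈ S ∧ v ≠ u ∧
    ∀ w ∈ S, w ∈ cone (coneIdx u v) u → projDist u v ≤ projDist u w

/-- `u → v` is a directed edge of `ΘΘ₆(S)`: it is an edge of `Θ₆(S)` and among all incoming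
`Θ₆`-edges `w → v` with `w` in the same cone of `v` as `u`, it minimizes `‖wv‖`. -/
def ThetaThetaEdge (S : Finset ℂ) (u v : ℂ) : Prop :=
  ThetaEdge S u v ∧
    ∀ w, ThetaEdge S w v → coneIdx v w = coneIdx v u → projDist u v ≤ projDist w v

/-- Undirected adjacency in `ΘΘ₆(S)`: paths may use edges in either direction. -/
def TTAdj (S : Finset ℂ) (u v : ℂ) : Prop := ThetaThetaEdge S u v ∨ ThetaThetaEdge S v u

/-- `p` is a path between `u` and `v` with respect to the adjacency relation `A`. -/
def IsPath (A : ℂ → ℂ → Prop) (u v : ℂ) (p : List ℂ) : Prop :=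
  p.Chain' A ∧ p.head? = some u ∧ p.getLast? = some v

/-- The Euclidean length of the polygonal path through the points of `p`. -/
def pathLength (p : List ℂ) : ℝ := (List.zipWith dist p p.tail).sum


lemma argIn_nonneg (z : ℂ) : 0 ≤ argIn z := by
  unfold argIn
  split_ifs with h
  · exact h
  · linarith [Complex.neg_pi_lt_arg z, Real.pi_pos]

lemma argIn_lt (z : ℂ) : argIn z < 2 * π := by
  unfold argIn
  split_ifs with h
  · linarith [Complex.arg_le_pi z, Real.pi_pos]
  · linarith [not_le.mp h]

lemma polar_argIn (z : ℂ) : (‖z‖ : ℂ) * Complex.exp ((argIn z : ℂ) * Complex.I) = z := by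
  unfold argIn
  split_ifs with h
  · exact Complex.norm_mul_exp_arg_mul_I z
  · have : ((Complex.arg z + 2 * π : ℝ) : ℂ) * Complex.I
        = (Complex.arg z : ℂ) * Complex.I + 2 * π * Complex.I := by
      push_cast; ring
    rw [this, Complex.exp_add, Complex.exp_two_pi_mul_I, mul_one]
    exact Complex.norm_mul_exp_arg_mul_I z

lemma argIn_polar {r θ : ℝ} (hr : 0 < r) (h0 : 0 ≤ θ) (h2 : θ < 2 * π) :
    argIn ((r : ℂ) * Complex.exp ((θ : ℂ) * Complex.I)) = θ := by
  have harg : ∀ t : ℝ, t ∈ Set.Ioc (-π) π →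
      Complex.arg ((r : ℂ) * Complex.exp ((t : ℂ) * Complex.I)) = t := by
    intro t ht
    rw [Complex.exp_mul_I]
    exact Complex.arg_mul_cos_add_sin_mul_I hr ht
  have hpi := Real.pi_pos
  by_cases h : θ ≤ π
  · unfold argIn
    rw [harg θ ⟨by linarith, h⟩, if_pos h0]
  · have hθ : Complex.exp ((θ : ℂ) * Complex.I)
        = Complex.exp (((θ - 2 * π : ℝ) : ℂ) * Complex.I) := by
      have : (θ : ℂ) * Complex.I
          = ((θ - 2 * π : ℝ) : ℂ) * Complex.I + 2 * π * Complex.I := by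
        push_cast; ring
      rw [this, Complex.exp_add, Complex.exp_two_pi_mul_I, mul_one]
    unfold argIn
    rw [hθ, harg (θ - 2 * π) ⟨by linarith, by linarith⟩, if_neg (by linarith)]
    ring

lemma argIn_neg_of_lt_pi {z : ℂ} (hz : z ≠ 0) (h : argIn z < π) :
    argIn (-z) = argIn z + π := by
  have e : -z = (‖z‖ : ℂ) * Complex.exp (((argIn z + π : ℝ) : ℂ) * Complex.I) := by
    push_cast
    rw [add_mul, Complex.exp_add, Complex.exp_pi_mul_I]
    linear_combination polar_argIn z
  rw [e]
  exact argIn_polar (norm_pos_iff.mpr hz)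
    (by linarith [argIn_nonneg z, Real.pi_pos]) (by linarith)

lemma argIn_neg_of_pi_le {z : ℂ} (hz : z ≠ 0) (h : π ≤ argIn z) :
    argIn (-z) = argIn z - π := by
  have e : -z = (‖z‖ : ℂ) * Complex.exp (((argIn z - π : ℝ) : ℂ) * Complex.I) := by
    push_cast
    rw [sub_mul, Complex.exp_sub, Complex.exp_pi_mul_I]
    linear_combination polar_argIn z
  rw [e]
  exact argIn_polar (norm_pos_iff.mpr hz) (by linarith) (by linarith [argIn_lt z, Real.pi_pos])

lemma coneIdx_eq (n : ℕ) {u v : ℂ} (h1 : (n : ℝ) * (π / 3) ≤ argIn (v - u))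
    (h2 : argIn (v - u) < ((n : ℝ) + 1) * (π / 3)) : coneIdx u v = n + 1 := by
  have hp : 0 < π / 3 := by positivity
  have : ⌊argIn (v - u) / (π / 3)⌋ = (n : ℤ) := by
    rw [Int.floor_eq_iff]
    push_cast
    exact ⟨(le_div_iff₀ hp).mpr h1, (div_lt_iff₀ hp).mpr h2⟩
  unfold coneIdx
  rw [this, Int.toNat_natCast]

/-- The signed length of the projection of `z` onto the direction `π / 6` bisecting `C₁`. -/
def bisProj (z : ℂ) : ℝ := (z * Complex.exp (-(Complex.I * ((π / 6 : ℝ) : ℂ)))).re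

lemma bisProj_sub (z w : ℂ) : bisProj (z - w) = bisProj z - bisProj w := by
  simp only [bisProj, sub_mul, Complex.sub_re]

lemma bisProj_eq (z : ℂ) : bisProj z = ‖z‖ * Real.cos (argIn z - π / 6) := by
  have : z * Complex.exp (-(Complex.I * ((π / 6 : ℝ) : ℂ)))
      = (‖z‖ : ℂ) * Complex.exp (((argIn z - π / 6 : ℝ) : ℂ) * Complex.I) := by
    conv_lhs => rw [← polar_argIn z]
    rw [mul_assoc, ← Complex.exp_add]
    congr 2
    push_cast
    ring
  rw [bisProj, this, Complex.re_ofReal_mul, Complex.exp_ofReal_mul_I_re]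

lemma projDist_eq_bisProj {u v : ℂ} (h : argIn (v - u) < π / 3) :
    projDist u v = bisProj (v - u) := by
  have h1 : coneIdx u v = 0 + 1 :=
    coneIdx_eq 0 (by simpa using argIn_nonneg (v - u)) (by simpa using h)
  have h2 : bisAngle u v = π / 6 := by
    simp [bisAngle, h1]
  rw [projDist, bisProj, h2]

/-- If `b ∈ C₁(a)`, `a → b` is an edge of `Θ₆(S)`, and `c ∈ S`, `c ≠ a`,
lies in the cone of `b` containing `a` with `‖cb‖ < ‖ab‖`, then `c ∈ C₂(a) ∪ C₆(a)`. -/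
theorem competitor_lies_in_neighbor_cone (S : Finset ℂ) (hgen : GenPos S) (a b c : ℂ)
    (ha : a ∈ S) (hb : b ∈ S) (hb1 : b ∈ cone 1 a) (habT : ThetaEdge S a b)
    (hc : c ∈ S) (hca : c ≠ a) (hcone : c ∈ cone (coneIdx b a) b)
    (hlt : projDist c b < projDist a b) :
    c ∈ cone 2 a ∨ c ∈ cone 6 a := by
  have hpi := Real.pi_pos
  obtain ⟨hba, -, hb1'⟩ := hb1
  have hab : argIn (b - a) < π / 3 := by simpa using hb1'
  have hba0 : b - a ≠ 0 := sub_ne_zero.mpr hba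
  have hrev : argIn (a - b) = argIn (b - a) + π := by
    rw [← neg_sub b a]
    exact argIn_neg_of_lt_pi hba0 (by linarith)
  have hidx : coneIdx b a = 3 + 1 :=
    coneIdx_eq 3 (by push_cast; linarith [argIn_nonneg (b - a)]) (by push_cast; linarith)
  rw [hidx] at hcone
  obtain ⟨hcb, hc1, hc2⟩ := hcone
  push_cast at hc1 hc2
  have hcb' : argIn (b - c) = argIn (c - b) - π := by
    rw [← neg_sub c b]
    exact argIn_neg_of_pi_le (sub_ne_zero.mpr hcb) (by linarith)
  have hbc : argIn (b - c) < π / 3 := by linarith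
  rw [projDist_eq_bisProj hab, projDist_eq_bisProj hbc] at hlt
  have hsub : bisProj (c - a) = bisProj (b - a) - bisProj (b - c) := by
    rw [← bisProj_sub]
    congr 1
    ring
  have hpos : 0 < bisProj (b - c) := by
    rw [bisProj_eq]
    have := argIn_nonneg (b - c)
    exact mul_pos (norm_pos_iff.mpr (sub_ne_zero.mpr hcb.symm))
      (Real.cos_pos_of_mem_Ioo ⟨by linarith, by linarith⟩)
  by_cases h1 : argIn (c - a) < π / 3
  · exfalso
    have hidx1 : coneIdx a b = 0 + 1 :=
      coneIdx_eq 0 (by simpa using argIn_nonneg (b - a)) (by simpa using hab)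
    have hle := habT.2.2.2 c hc (by
      rw [hidx1]
      exact ⟨hca, by simpa using argIn_nonneg (c - a), by simpa using h1⟩)
    rw [projDist_eq_bisProj hab, projDist_eq_bisProj h1] at hle
    linarith
  by_cases h2 : argIn (c - a) < 2 * (π / 3)
  · left
    exact ⟨hca, by push_cast; linarith, by push_cast; linarith⟩
  by_cases h6 : 5 * (π / 3) ≤ argIn (c - a)
  · right
    exact ⟨hca, by push_cast; linarith, by push_cast; linarith [argIn_lt (c - a)]⟩
  -- The remaining directions make an angle of at least `π / 2` with the bisector of `C₁(a)`.
  exfalso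
  have hcos : Real.cos (argIn (c - a) - π / 6) ≤ 0 :=
    Real.cos_nonpos_of_pi_div_two_le_of_le (by linarith) (by linarith)
  have hnonpos : bisProj (c - a) ≤ 0 := by
    rw [bisProj_eq]
    exact mul_nonpos_of_nonneg_of_nonpos (norm_nonneg _) hcos
  linarith

end
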